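/- arXiv:0711.0252 — 3 statements merged into one kernel-verified Lean document; each statement's English description precedes it below -/
import Mathlib

section
/- For all positive integers k1, …, kn with k1 ≥ 2, one has Σ_{i=1}^{n} (k_i − 1 + δ_{ni}) ζ̄(k1, …, k_{i−1}, k_i + 1, k_{i+1}, …, kn) = Σ_{1 ≤ i ≤ n, k_i ≥ 2} Σ_{j=0}^{k_i − 2} ζ̄(k1, …, k_{i−1}, k_i − j, j + 1, k_{i+1}, …, kn), where δ_{ni} = 1 if i = n and 0 otherwise. -/
open scoped BigOperators
/-- The non-strict multiple zeta value ζ̄(k₁,…,kₙ): the sum over all weakly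
decreasing tuples m₁ ≥ m₂ ≥ ⋯ ≥ mₙ > 0 of 1/(m₁^{k₁}⋯mₙ^{kₙ}). -/
noncomputable def nmzeta (ks : List ℕ) : ℝ :=
  ∑' m : {f : Fin ks.length → ℕ // (∀ i, 0 < f i) ∧
      ∀ i j : Fin ks.length, i ≤ j → f j ≤ f i},
    ∏ i : Fin ks.length, ((m.1 i : ℝ) ^ ks.get i)⁻¹

namespace NM
noncomputable def H (M : ℕ) : ℝ := ∑ i ∈ Finset.range M, ((i:ℝ)+1)⁻¹
noncomputable def S : List ℕ → ℕ → ℝ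
  | [], _ => 1
  | k :: ks, M => ∑ m ∈ Finset.range M, (((m:ℝ)+1)^k)⁻¹ * S ks (m+1)

lemma H_succ (M : ℕ) : H (M+1) = H M + ((M:ℝ)+1)⁻¹ := by
  simp [H, Finset.sum_range_succ]

lemma S_cons (k : ℕ) (ks : List ℕ) (M : ℕ) :
  S (k :: ks) M = ∑ m ∈ Finset.range M, (((m:ℝ)+1)^k)⁻¹ * S ks (m+1) := rfl

lemma geo (x y : ℝ) (hx : x ≠ 0) (hy : y ≠ 0) (hxy : x - y ≠ 0) (n : ℕ) :
    ∑ j ∈ Finset.range n, (x^(n+1-j))⁻¹ * (y^(j+1))⁻¹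
      = (x⁻¹ * (y^n)⁻¹ - (x^(n+1))⁻¹) / (x-y) := by
  induction n with
  | zero => simp
  | succ n ih =>
    rw [Finset.sum_range_succ]
    have : ∑ j ∈ Finset.range n, (x^(n+1+1-j))⁻¹ * (y^(j+1))⁻¹
      = x⁻¹ * ∑ j ∈ Finset.range n, (x^(n+1-j))⁻¹ * (y^(j+1))⁻¹ := by
      rw [Finset.mul_sum]
      refine Finset.sum_congr rfl fun j hj => ?_
      rw [Finset.mem_range] at hj
      rw [show n+1+1-j = (n+1-j)+1 by omega, pow_succ, mul_inv]; ring
    rw [this, ih, show n+1+1-n = 2 by omega]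
    field_simp
    ring

noncomputable def Z (g : ℕ → ℝ) (M : ℕ) : ℝ :=
  ∑ m ∈ Finset.range M, g m * (H (M-1-m) - H M)

lemma Z_succ (g : ℕ → ℝ) (M : ℕ) :
    Z g (M+1) = Z g M + (∑ m ∈ Finset.range M, g m * (((M:ℝ)-m)⁻¹ - ((M:ℝ)+1)⁻¹)
      - g M * H (M+1)) := by
  unfold Z
  rw [Finset.sum_range_succ]
  have h0 : H (M+1-1-M) = 0 := by simp [H]
  rw [h0]
  have : ∀ m ∈ Finset.range M, g m * (H (M+1-1-m) - H (M+1))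
     = g m * (H (M-1-m) - H M) + g m * (((M:ℝ)-m)⁻¹ - ((M:ℝ)+1)⁻¹) := by
    intro m hm
    rw [Finset.mem_range] at hm
    obtain ⟨d, rfl⟩ : ∃ d, M = m + d + 1 := ⟨M-m-1, by omega⟩
    rw [show m+d+1+1-1-m = d+1 by omega, show m+d+1-1-m = d by omega, H_succ d, H_succ (m+d+1)]
    push_cast
    rw [show (m:ℝ)+d+1-m = d+1 by ring]
    ring
  rw [Finset.sum_congr rfl this, Finset.sum_add_distrib]
  ring

noncomputable def Q (ks : List ℕ) (N : ℕ) : ℝ :=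
  ∑ b ∈ Finset.range N, S ks (b+1) * ((N:ℝ)-b)⁻¹ - H (N+1) * S ks (N+1)

lemma Q_nil (N : ℕ) : Q [] N = - ((N:ℝ)+1)⁻¹ := by
  simp only [Q, S, one_mul, mul_one]
  rw [H_succ]
  have : ∑ b ∈ Finset.range N, ((N:ℝ)-b)⁻¹ = H N := by
    unfold H
    rw [← Finset.sum_range_reflect]
    refine Finset.sum_congr rfl fun j hj => ?_
    rw [Finset.mem_range] at hj
    congr 1
    rw [Nat.cast_sub (by omega), Nat.cast_sub (by omega)]
    push_cast; ring
  rw [this]; ring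

lemma swapA (g : ℕ → ℝ) (N : ℕ) :
    ∑ b ∈ Finset.range N, (∑ m ∈ Finset.range (b+1), g m) * ((N:ℝ)-b)⁻¹
     = ∑ m ∈ Finset.range N, g m * H (N-m) := by
  simp_rw [Finset.sum_mul]
  rw [Finset.sum_comm' (t' := Finset.range N) (s' := fun m => Finset.Ico m N)]
  · refine Finset.sum_congr rfl fun m hm => ?_
    rw [Finset.mem_range] at hm
    rw [← Finset.mul_sum, Finset.sum_Ico_eq_sum_range]
    congr 1
    unfold H
    rw [← Finset.sum_range_reflect]
    refine Finset.sum_congr rfl fun j hj => ?_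
    rw [Finset.mem_range] at hj
    congr 1
    push_cast [Nat.cast_sub (show 1 ≤ N - m by omega), Nat.cast_sub (show m ≤ N by omega), Nat.cast_sub (show j ≤ N - m - 1 by omega)]
    ring
  · intro x y; simp only [Finset.mem_range, Finset.mem_Ico]; omega

noncomputable def gg (k : ℕ) (ks : List ℕ) (m : ℕ) : ℝ := (((m:ℝ)+1)^k)⁻¹ * S ks (m+1)

lemma Q_cons (k : ℕ) (ks : List ℕ) (N : ℕ) : Q (k::ks) N = Z (gg k ks) (N+1) := by
  unfold Q
  have h : ∀ M, S (k::ks) M = ∑ m ∈ Finset.range M, gg k ks m := fun M => rfl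
  simp_rw [h]
  rw [swapA, Z, Finset.sum_range_succ, Finset.sum_range_succ]
  have h0 : H (N+1-1-N) = 0 := by simp [H]
  rw [h0]
  simp only [mul_sub, Finset.sum_sub_distrib, ← Finset.sum_mul, Nat.add_sub_cancel]
  ring

lemma step (k : ℕ) (hk : 1 ≤ k) (ks : List ℕ) (M : ℕ) :
    ∑ a ∈ Finset.range M, (∑ b ∈ Finset.range a, (∑ j ∈ Finset.range (k-1),
        (((a:ℝ)+1)^(k-j))⁻¹ * (((b:ℝ)+1)^(j+1))⁻¹) * S ks (b+1)
        + (((a:ℝ)+1)^k)⁻¹ * Q ks a) = Z (gg k ks) M := by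
  induction M with
  | zero => simp [Z]
  | succ M ih =>
    rw [Finset.sum_range_succ, ih, Z_succ]
    congr 1
    unfold Q
    rw [mul_sub, Finset.mul_sum, ← add_sub_assoc, ← Finset.sum_add_distrib]
    congr 1
    · refine Finset.sum_congr rfl fun b hb => ?_
      rw [Finset.mem_range] at hb
      obtain ⟨n, rfl⟩ : ∃ n, k = n + 1 := ⟨k-1, by omega⟩
      have hb' : (b:ℝ) < M := by exact_mod_cast hb
      have hMb : (M:ℝ) - b ≠ 0 := by linarith
      have h1 : (M:ℝ) + 1 ≠ 0 := by positivity
      have h2 : (b:ℝ) + 1 ≠ 0 := by positivity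
      rw [Nat.add_sub_cancel, geo _ _ h1 h2 (by rwa [add_sub_add_right_eq_sub])]
      rw [gg, add_sub_add_right_eq_sub]
      field_simp
      ring
    · rw [gg]; ring

noncomputable def G (F : List ℕ → ℝ) (k : List ℕ) : ℝ :=
  ∑ i ∈ Finset.range k.length,
    ((if 2 ≤ k.getD i 0 then
          ∑ j ∈ Finset.range (k.getD i 0 - 1),
            F (k.take i ++ [k.getD i 0 - j, j + 1] ++ k.drop (i + 1))
        else 0) -
      (((k.getD i 0 : ℝ) - 1) + (if i = k.length - 1 then 1 else 0)) *
        F (k.take i ++ [k.getD i 0 + 1] ++ k.drop (i + 1)))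

lemma G_lin (s : Finset ℕ) (c : ℕ → ℝ) (F : ℕ → List ℕ → ℝ) (k : List ℕ) :
    G (fun l => ∑ m ∈ s, c m * F m l) k = ∑ m ∈ s, c m * G (F m) k := by
  simp only [G, Finset.mul_sum]
  rw [Finset.sum_comm]
  refine Finset.sum_congr rfl fun i _ => ?_
  simp only [mul_sub, Finset.sum_sub_distrib]
  congr 1
  · split_ifs
    · rw [Finset.sum_comm]
      simp only [Finset.mul_sum]
    · simp
  · refine Finset.sum_congr rfl fun m _ => ?_
    ring

lemma G_cons (F : List ℕ → ℝ) (a : ℕ) (l : List ℕ) :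
    G F (a::l) = (∑ j ∈ Finset.range (a - 1), F ((a-j) :: (j+1) :: l) - ((a:ℝ)-1) * F ((a+1)::l))
      + if l = [] then - F [a+1] else G (fun l' => F (a::l')) l := by
  have hif : (if 2 ≤ a then ∑ j ∈ Finset.range (a - 1), F ((a-j) :: (j+1) :: l) else 0) = 
    ∑ j ∈ Finset.range (a - 1), F ((a-j) :: (j+1) :: l) := by
    split_ifs with h
    · rfl
    · rw [show a - 1 = 0 by omega]; simp
  rcases l with _ | ⟨b, l⟩
  · simp only [G, List.length_cons, List.length_nil, zero_add, Finset.sum_range_one]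
    simp only [List.getD_cons_zero, List.take_zero, List.nil_append, List.drop_succ_cons, List.drop_nil, List.cons_append, List.append_nil, List.drop_zero]
    rw [hif]; simp; ring
  · unfold G
    rw [List.length_cons, Finset.sum_range_succ', add_comm, if_neg (List.cons_ne_nil b l)]
    congr 1
    · simp only [List.getD_cons_zero, List.take_zero, List.nil_append, List.drop_succ_cons, List.cons_append, List.drop_zero]
      rw [hif]; simp
    · refine Finset.sum_congr rfl fun i hi => ?_
      simp

lemma G_S (k : List ℕ) (hpos : ∀ a ∈ k, 1 ≤ a) (M : ℕ) (hne : k ≠ []) :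
    G (fun l => S l M) k = Z (gg k.headI k.tail) M := by
  induction k generalizing M with
  | nil => simp at hne
  | cons a l ih =>
    have ha : 1 ≤ a := hpos a (by simp)
    simp only [List.headI_cons, List.tail_cons]
    rw [← step a ha, G_cons]
    rw [Finset.sum_add_distrib]
    congr 1
    · have : ∀ j ∈ Finset.range (a-1), S ((a-j)::(j+1)::l) M = 
        ∑ x ∈ Finset.range M, ∑ b ∈ Finset.range x, 
        (((x:ℝ)+1)^(a-j))⁻¹ * (((b:ℝ)+1)^(j+1))⁻¹ * S l (b+1)
         + S ((a+1)::l) M := by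
        intro j hj
        rw [Finset.mem_range] at hj
        simp only [S_cons, ← Finset.sum_add_distrib]
        refine Finset.sum_congr rfl fun x _ => ?_
        rw [Finset.sum_range_succ, mul_add, Finset.mul_sum]
        congr 1
        · refine Finset.sum_congr rfl fun b _ => ?_
          ring
        · rw [← mul_assoc, ← mul_inv, ← pow_add, show a - j + (j+1) = a + 1 by omega]
      rw [Finset.sum_congr rfl this, Finset.sum_add_distrib, Finset.sum_const, Finset.card_range,
        nsmul_eq_mul, Nat.cast_sub ha, Nat.cast_one, add_sub_cancel_right, Finset.sum_comm]
      refine Finset.sum_congr rfl fun x _ => ?_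
      rw [Finset.sum_comm]
      refine Finset.sum_congr rfl fun b _ => ?_
      rw [Finset.sum_mul]
    · split_ifs with hl
      · subst hl
        simp only [Q_nil, S, mul_one, ← Finset.sum_neg_distrib]
        refine Finset.sum_congr rfl fun x _ => ?_
        rw [pow_succ, mul_inv]; ring
      · simp only [S_cons]
        rw [G_lin (Finset.range M) (fun m => (((m:ℝ)+1)^a)⁻¹) (fun m l => S l (m+1))]
        refine Finset.sum_congr rfl fun x _ => ?_
        rw [ih (fun b hb => hpos b (by simp [hb])) _ hl]
        congr 1
        rcases l with _ | ⟨b, l⟩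
        · simp at hl
        · rw [Q_cons]; rfl


lemma H_nonneg (M : ℕ) : 0 ≤ H M := Finset.sum_nonneg fun i _ => by positivity

lemma H_mono : Monotone H := monotone_nat_of_le_succ fun n => by
  rw [H_succ]; have : (0:ℝ) ≤ ((n:ℝ)+1)⁻¹ := by positivity
  linarith

lemma one_le_H (M : ℕ) : 1 ≤ H (M+1) := by
  have h : H 1 = 1 := by simp [H]
  rw [← h]; exact H_mono (by omega)

lemma S_nonneg (ks : List ℕ) (M : ℕ) : 0 ≤ S ks M := by
  induction ks generalizing M with
  | nil => simp [S]
  | cons k ks ih =>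
    rw [S_cons]
    exact Finset.sum_nonneg fun i _ => mul_nonneg (by positivity) (ih _)

lemma S_le (ks : List ℕ) (hpos : ∀ a ∈ ks, 1 ≤ a) (M : ℕ) : S ks M ≤ H M ^ ks.length := by
  induction ks generalizing M with
  | nil => simp [S]
  | cons k ks ih =>
    rw [S_cons, List.length_cons, pow_succ']
    nth_rewrite 1 [H]
    rw [Finset.sum_mul]
    refine Finset.sum_le_sum fun m hm => ?_
    rw [Finset.mem_range] at hm
    have hk : 1 ≤ k := hpos k (by simp)
    refine mul_le_mul ?_ ?_ (S_nonneg _ _) (by positivity)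
    · refine inv_anti₀ (by positivity) ?_
      exact le_self_pow₀ (by linarith [(Nat.cast_nonneg m : (0:ℝ) ≤ m)]) (by omega)
    · refine (ih (fun b hb => hpos b (by simp [hb])) _).trans ?_
      exact pow_le_pow_left₀ (H_nonneg _) (H_mono (by omega)) _

lemma H_le (M : ℕ) (e : ℝ) (he : 0 < e) : H (M+1) ≤ (1 + e⁻¹) * ((M:ℝ)+1)^e := by
  have h1 : H (M+1) = ((harmonic (M+1) : ℚ) : ℝ) := by
    simp [H, harmonic]
  have h2 := harmonic_le_one_add_log (M+1)
  have h3 := Real.log_le_rpow_div (x := (M:ℝ)+1) (by positivity) he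
  have h4 : (1:ℝ) ≤ ((M:ℝ)+1)^e := Real.one_le_rpow (by linarith [(Nat.cast_nonneg M : (0:ℝ) ≤ M)]) he.le
  rw [h1]
  push_cast at h2 ⊢
  rw [div_eq_mul_inv] at h3
  linarith

lemma summ (k : ℕ) (hk : 2 ≤ k) (ks : List ℕ) (hpos : ∀ a ∈ ks, 1 ≤ a) :
    Summable fun m => gg k ks m * H (m+1) := by
  set n := ks.length + 1 with hn
  set e : ℝ := (2 * (n:ℝ))⁻¹ with he
  have hn0 : (0:ℝ) < n := by rw [hn]; positivity
  have he0 : 0 < e := by positivity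
  have hs : Summable fun m : ℕ => (1+e⁻¹)^n * (((m+1 : ℕ):ℝ)^(-(3/2) : ℝ)) := by
    refine Summable.mul_left _ ?_
    exact (summable_nat_add_iff 1).2 (Real.summable_nat_rpow.2 (by norm_num))
  refine Summable.of_nonneg_of_le (fun m => ?_) (fun m => ?_) hs
  · exact mul_nonneg (mul_nonneg (by positivity) (S_nonneg _ _)) (H_nonneg _)
  · have h1 : (1:ℝ) ≤ (m:ℝ)+1 := by linarith [(Nat.cast_nonneg m : (0:ℝ) ≤ m)]
    have hm0 : (0:ℝ) < (m:ℝ)+1 := by linarith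
    have hSH : S ks (m+1) * H (m+1) ≤ (1+e⁻¹)^n * ((m:ℝ)+1)^(1/2 : ℝ) := by
      calc S ks (m+1) * H (m+1) ≤ H (m+1) ^ ks.length * H (m+1) :=
            mul_le_mul_of_nonneg_right (S_le ks hpos _) (H_nonneg _)
        _ = H (m+1) ^ n := by rw [hn, pow_succ]
        _ ≤ ((1 + e⁻¹) * ((m:ℝ)+1)^e)^n := pow_le_pow_left₀ (H_nonneg _) (H_le m e he0) _
        _ = _ := by
          rw [mul_pow, ← Real.rpow_natCast (((m:ℝ)+1)^e), ← Real.rpow_mul hm0.le]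
          congr 2
          rw [he]; field_simp
    have hp : (((m:ℝ)+1)^k)⁻¹ ≤ ((m:ℝ)+1)^(-2:ℝ) := by
      rw [Real.rpow_neg hm0.le]
      refine inv_anti₀ (by positivity) ?_
      rw [show (2:ℝ) = ((2:ℕ):ℝ) by norm_num, Real.rpow_natCast]
      exact pow_le_pow_right₀ h1 hk
    calc gg k ks m * H (m+1) = (((m:ℝ)+1)^k)⁻¹ * (S ks (m+1) * H (m+1)) := by rw [gg]; ring
      _ ≤ ((m:ℝ)+1)^(-2:ℝ) * ((1+e⁻¹)^n * ((m:ℝ)+1)^(1/2 : ℝ)) :=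
        mul_le_mul hp hSH (mul_nonneg (S_nonneg _ _) (H_nonneg _)) (by positivity)
      _ = _ := by
        push_cast
        rw [mul_left_comm, ← Real.rpow_add hm0]
        norm_num

lemma gg_nonneg (k ks m) : 0 ≤ gg k ks m := mul_nonneg (by positivity) (S_nonneg _ _)

lemma summ' (k : ℕ) (hk : 2 ≤ k) (ks : List ℕ) (hpos : ∀ a ∈ ks, 1 ≤ a) :
    Summable (gg k ks) := by
  refine Summable.of_nonneg_of_le (gg_nonneg k ks) (fun m => ?_) (summ k hk ks hpos)
  exact le_mul_of_one_le_right (gg_nonneg _ _ _) (one_le_H m)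

lemma H_add (a b : ℕ) : H (a+b) = H a + ∑ i ∈ Finset.range b, ((a:ℝ)+i+1)⁻¹ := by
  rw [H, Finset.sum_range_add]; simp [H]

lemma Z_tendsto (g : ℕ → ℝ) (hg : ∀ m, 0 ≤ g m) (hs : Summable fun m => g m * H (m+1)) :
    Filter.Tendsto (Z g) Filter.atTop (nhds 0) := by
  have key := tendsto_tsum_of_dominated_convergence (𝓕 := Filter.atTop)
    (f := fun M m => if m < M then g m * (H (M-1-m) - H M) else 0) (g := fun _ => (0:ℝ)) hs
    (fun m => ?_) (Filter.Eventually.of_forall fun M m => ?_)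
  · rw [tsum_zero] at key
    refine key.congr fun M => ?_
    rw [tsum_eq_sum (s := Finset.range M)]
    · refine Finset.sum_congr rfl fun m hm => ?_
      rw [if_pos (Finset.mem_range.1 hm)]
    · intro m hm; rw [if_neg (by simpa using hm)]
  · rw [← Filter.tendsto_add_atTop_iff_nat (m+1)]
    have : (fun N => if m < N + (m+1) then g m * (H (N+(m+1)-1-m) - H (N+(m+1))) else 0)
      = fun N : ℕ => g m * (- ∑ i ∈ Finset.range (m+1), ((N:ℝ)+i+1)⁻¹) := by
      funext N
      rw [if_pos (by omega), show N+(m+1)-1-m = N by omega, H_add]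
      ring
    rw [this]
    have h0 : Filter.Tendsto (fun N : ℕ => ∑ i ∈ Finset.range (m+1), ((N:ℝ)+i+1)⁻¹)
      Filter.atTop (nhds (∑ i ∈ Finset.range (m+1), (0:ℝ))) := by
      refine tendsto_finsetSum _ fun i _ => ?_
      refine Filter.Tendsto.inv_tendsto_atTop ?_
      simp only [add_assoc]
      exact Filter.tendsto_atTop_add_const_right _ _ tendsto_natCast_atTop_atTop
    simpa using (h0.neg).const_mul (g m)
  · split_ifs with h
    · obtain ⟨d, rfl⟩ : ∃ d, M = d + (m + 1) := ⟨M - (m+1), by omega⟩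
      rw [show d+(m+1)-1-m = d by omega, H_add, Real.norm_eq_abs, abs_mul, abs_of_nonneg (hg m)]
      refine mul_le_mul_of_nonneg_left ?_ (hg m)
      rw [sub_add_cancel_left, abs_neg, abs_of_nonneg (Finset.sum_nonneg fun i _ => by positivity)]
      refine Finset.sum_le_sum fun i _ => inv_anti₀ (by positivity) ?_
      linarith [(Nat.cast_nonneg d : (0:ℝ) ≤ d)]
    · simpa using mul_nonneg (hg m) (H_nonneg _)

open Classical in
noncomputable def E (ks : List ℕ) (p : ℕ → Prop) : ENNReal :=
  ∑' f : Fin ks.length → ℕ, if ((∀ i, 0 < f i) ∧ 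
      ∀ i j : Fin ks.length, i ≤ j → f j ≤ f i) ∧ ∀ i, p (f i) then 
    ENNReal.ofReal (∏ i : Fin ks.length, ((f i : ℝ) ^ ks.get i)⁻¹) else 0

open Classical in
lemma E_cons (k : ℕ) (ks : List ℕ) (p : ℕ → Prop) (hp : ∀ a b, a ≤ b → p b → p a) :
    E (k::ks) p = ∑' m : ℕ, if 0 < m ∧ p m then 
      ENNReal.ofReal (((m:ℝ)^k)⁻¹) * E ks (· ≤ m) else 0 := by
  unfold E
  refine ((Fin.consEquiv (n := ks.length) (fun _ => ℕ)).tsum_eq _).symm.trans ?_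
  rw [ENNReal.tsum_prod']
  refine tsum_congr fun m => ?_
  have hc : ∀ f : Fin ks.length → ℕ,
     (((∀ i : Fin (ks.length+1), 0 < (Fin.cons m f : Fin (ks.length+1) → ℕ) i) ∧ 
      ∀ i j : Fin (ks.length+1), i ≤ j → (Fin.cons m f : Fin (ks.length+1) → ℕ) j ≤ (Fin.cons m f : Fin (ks.length+1) → ℕ) i) ∧ ∀ i : Fin (ks.length+1), p ((Fin.cons m f : Fin (ks.length+1) → ℕ) i))
      ↔ (0 < m ∧ p m) ∧ (((∀ i, 0 < f i) ∧ 
      ∀ i j : Fin ks.length, i ≤ j → f j ≤ f i) ∧ ∀ i, f i ≤ m) := by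
    intro f
    simp only [Fin.forall_fin_succ, Fin.cons_zero, Fin.cons_succ, le_refl, Fin.succ_le_succ_iff, Fin.zero_le, true_implies, true_and]
    constructor
    · rintro ⟨⟨⟨a, b⟩, c, d⟩, e, h⟩
      exact ⟨⟨a, e⟩, ⟨b, fun i => (d i).2⟩, c⟩
    · rintro ⟨⟨a, e⟩, ⟨b, d⟩, c⟩
      refine ⟨⟨⟨a, b⟩, c, fun i => ⟨fun h => absurd h (by simp [Fin.le_def]), d i⟩⟩, e, fun i => hp _ _ (c i) e⟩
  rw [← ENNReal.tsum_mul_left]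
  by_cases hm : 0 < m ∧ p m
  · rw [if_pos hm]
    refine tsum_congr fun f => ?_
    by_cases hf : ((∀ i, 0 < f i) ∧ 
      ∀ i j : Fin ks.length, i ≤ j → f j ≤ f i) ∧ ∀ i, f i ≤ m
    · rw [if_pos hf]
      refine (if_pos ((hc f).2 ⟨hm, hf⟩)).trans ?_
      rw [← ENNReal.ofReal_mul (by positivity)]
      congr 1
      exact Fin.prod_univ_succ (n := ks.length) _
    · rw [if_neg hf, mul_zero]
      exact if_neg fun h => hf ((hc f).1 h).2
  · rw [if_neg hm]
    refine ENNReal.tsum_eq_zero.2 fun f => ?_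
    exact if_neg fun h => hm ((hc f).1 h).1

lemma E_eq (ks : List ℕ) (M : ℕ) : E ks (· ≤ M) = ENNReal.ofReal (S ks M) := by
  induction ks generalizing M with
  | nil => 
    unfold E
    have hsub : Subsingleton (Fin ([] : List ℕ).length → ℕ) :=
      (inferInstance : Subsingleton (Fin 0 → ℕ))
    rw [tsum_eq_single (fun _ : Fin ([] : List ℕ).length => 0)
      (fun f h => absurd (Subsingleton.elim f _) h)]
    rw [if_pos ⟨⟨fun i => i.elim0, fun i => i.elim0⟩, fun i => i.elim0⟩]
    simp [S]
  | cons k ks ih =>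
    rw [E_cons _ _ _ (fun a b h1 h2 => h1.trans h2)]
    rw [tsum_eq_zero_add' ENNReal.summable, if_neg (by simp), zero_add]
    rw [tsum_eq_sum (s := Finset.range M), S_cons, ENNReal.ofReal_sum_of_nonneg]
    · refine Finset.sum_congr rfl fun m hm => ?_
      rw [Finset.mem_range] at hm
      rw [if_pos ⟨by omega, by omega⟩, ih, ← ENNReal.ofReal_mul (by positivity)]
      push_cast; rfl
    · exact fun m _ => gg_nonneg k ks m
    · intro m hm
      rw [Finset.mem_range] at hm
      exact if_neg (by omega)

lemma nmzeta_eq (k : ℕ) (ks : List ℕ) : nmzeta (k::ks) = ∑' m, gg k ks m := by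
  classical
  have h1 : nmzeta (k::ks) = (E (k::ks) (fun _ => True)).toReal := by
    unfold E nmzeta
    rw [ENNReal.tsum_toReal_eq]
    · refine (tsum_subtype {f : Fin (k::ks).length → ℕ | (∀ i, 0 < f i) ∧
        ∀ i j : Fin (k::ks).length, i ≤ j → f j ≤ f i} 
          (fun f => ∏ i : Fin (k::ks).length, ((f i : ℝ) ^ (k::ks).get i)⁻¹)).trans ?_
      refine tsum_congr fun f => ?_
      rw [Set.indicator_apply]
      simp only [implies_true, and_true, Set.mem_ofPred_eq]
      split_ifs
      · rw [ENNReal.toReal_ofReal (Finset.prod_nonneg fun i _ => by positivity)]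
      · simp
    · intro f; split_ifs <;> simp
  rw [h1, E_cons _ _ _ (fun _ _ _ h => h), tsum_eq_zero_add' ENNReal.summable, if_neg (by simp), zero_add]
  rw [ENNReal.tsum_toReal_eq]
  · refine tsum_congr fun m => ?_
    rw [if_pos ⟨by omega, trivial⟩, E_eq, ← ENNReal.ofReal_mul (by positivity)]
    push_cast
    exact ENNReal.toReal_ofReal (gg_nonneg k ks m)
  · intro m
    rw [if_pos ⟨by omega, trivial⟩, E_eq, ← ENNReal.ofReal_mul (by positivity)]
    exact ENNReal.ofReal_ne_top

lemma S_tendsto (l : List ℕ) (hl : 2 ≤ l.headI) (hpos : ∀ a ∈ l, 1 ≤ a) :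
    Filter.Tendsto (fun M => S l M) Filter.atTop (nhds (nmzeta l)) := by
  rcases l with _ | ⟨k, ks⟩
  · simp at hl
  · rw [nmzeta_eq]
    exact (summ' k hl ks (fun a ha => hpos a (by simp [ha]))).hasSum.tendsto_sum_nat

lemma G_tendsto (k : List ℕ) (hpos : ∀ a ∈ k, 1 ≤ a) (h2 : 2 ≤ k.headI) :
    Filter.Tendsto (fun M => G (fun l => S l M) k) Filter.atTop (nhds (G nmzeta k)) := by
  unfold G
  have hd : ∀ i, ∀ a ∈ k.drop i, 1 ≤ a := fun i a ha => hpos a (List.mem_of_mem_drop ha)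
  have ht : ∀ i, ∀ a ∈ k.take i, 1 ≤ a := fun i a ha => hpos a (List.mem_of_mem_take ha)
  have hh : ∀ i, ∀ a l, (a = k.getD i 0 ∨ i ≠ 0 ∨ 2 ≤ a) → 2 ≤ (k.take i ++ a :: l).headI := by
    intro i a l h
    rcases k with _ | ⟨b, k⟩
    · simp at h2
    · rcases i with _ | i
      · simp at h h2 ⊢; omega
      · simpa using h2
  refine tendsto_finsetSum _ fun i _ => Filter.Tendsto.sub ?_ (Filter.Tendsto.const_mul _ ?_)
  · split_ifs with h
    · refine tendsto_finsetSum _ fun j hj => ?_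
      rw [Finset.mem_range] at hj
      refine S_tendsto _ ?_ ?_
      · rw [List.append_assoc]
        exact hh _ _ _ (Or.inr (Or.inr (by omega)))
      · intro a ha
        simp only [List.mem_append, List.mem_cons, List.not_mem_nil, or_false] at ha
        rcases ha with (ha | ha | ha) | ha
        · exact ht _ _ ha
        · omega
        · omega
        · exact hd _ _ ha
    · exact tendsto_const_nhds
  · refine S_tendsto _ ?_ ?_
    · rw [List.append_assoc]
      refine hh _ _ _ ?_
      rcases i with _ | i
      · right; right
        rcases k with _ | ⟨b, k⟩
        · simp at h2
        · simp at h2 ⊢; omega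
      · simp
    · intro a ha
      simp only [List.mem_append, List.mem_cons, List.not_mem_nil, or_false] at ha
      rcases ha with (ha | ha) | ha
      · exact ht _ _ ha
      · omega
      · exact hd _ _ ha
end NM

/-- Hoffman-type relations for non-strict multiple zeta values:
for positive integers k₁,…,kₙ with k₁ ≥ 2,
Σᵢ (kᵢ − 1 + δₙᵢ) ζ̄(k₁,…,kᵢ+1,…,kₙ)
  = Σ_{i, kᵢ ≥ 2} Σ_{j=0}^{kᵢ−2} ζ̄(k₁,…,k_{i−1}, kᵢ−j, j+1, k_{i+1},…,kₙ). -/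
theorem nmzv_hoffman_relations (k : List ℕ) (hne : k ≠ [])
    (hpos : ∀ a ∈ k, 1 ≤ a) (h2 : 2 ≤ k.headI) :
    ∑ i ∈ Finset.range k.length,
      (((k.getD i 0 : ℝ) - 1) + (if i = k.length - 1 then 1 else 0)) *
        nmzeta (k.take i ++ [k.getD i 0 + 1] ++ k.drop (i + 1))
    = ∑ i ∈ Finset.range k.length,
        if 2 ≤ k.getD i 0 then
          ∑ j ∈ Finset.range (k.getD i 0 - 1),
            nmzeta (k.take i ++ [k.getD i 0 - j, j + 1] ++ k.drop (i + 1))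
        else 0 := by
  have h1 := NM.G_tendsto k hpos h2
  have h3 : Filter.Tendsto (fun M => NM.G (fun l => NM.S l M) k) Filter.atTop (nhds 0) := by
    simp only [fun M => NM.G_S k hpos M hne]
    exact NM.Z_tendsto _ (NM.gg_nonneg _ _)
      (NM.summ _ h2 _ (fun a ha => hpos a (List.mem_of_mem_tail ha)))
  have h4 := tendsto_nhds_unique h1 h3
  unfold NM.G at h4
  rw [Finset.sum_sub_distrib] at h4
  linarith
end

section
/- For all positive integers k1, …, kn with k1 ≥ 2, one has Σ_{i=1}^{n} ζ(k1, …, k_{i−1}, k_i + 1, k_{i+1}, …, kn) = Σ_{1 ≤ i ≤ n, k_i ≥ 2} Σ_{j=0}^{k_i − 2} ζ(k1, …, k_{i−1}, k_i − j, j + 1, k_{i+1}, …, kn) (Hoffman's relations). -/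
open scoped BigOperators

/-- The multiple zeta value ζ(k₁,…,kₙ): the sum over all strictly decreasing
tuples m₁ > m₂ > ⋯ > mₙ > 0 of 1/(m₁^{k₁}⋯mₙ^{kₙ}). -/
noncomputable def mzeta (ks : List ℕ) : ℝ :=
  ∑' m : {f : Fin ks.length → ℕ // (∀ i, 0 < f i) ∧
      ∀ i j : Fin ks.length, i < j → f j < f i},
    ∏ i : Fin ks.length, ((m.1 i : ℝ) ^ ks.get i)⁻¹

noncomputable def ZZ : List ℕ → ℕ → ℝ
  | [], _ => 1
  | k :: l, N => ∑ i ∈ Finset.range N, (((i + 1 : ℕ) : ℝ) ^ k)⁻¹ * ZZ l i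

noncomputable def HH (n : ℕ) : ℝ := ∑ i ∈ Finset.range n, ((i + 1 : ℕ) : ℝ)⁻¹

noncomputable def AA : List ℕ → ℕ → ℝ
  | [], _ => 0
  | k :: l, N => ZZ ((k + 1) :: l) N + ∑ i ∈ Finset.range N, (((i + 1 : ℕ) : ℝ) ^ k)⁻¹ * AA l i

noncomputable def BB : List ℕ → ℕ → ℝ
  | [], _ => 0
  | k :: l, N => (∑ j ∈ Finset.range (k - 1), ZZ ((k - j) :: (j + 1) :: l) N)
      + ∑ i ∈ Finset.range N, (((i + 1 : ℕ) : ℝ) ^ k)⁻¹ * BB l i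

noncomputable def DD : List ℕ → ℕ → ℝ
  | [], _ => 0
  | k :: l, N => ∑ i ∈ Finset.range N,
      (((i + 1 : ℕ) : ℝ) ^ k)⁻¹ * ZZ l i * (HH N - HH (N - (i + 1)))

lemma sum_tri (f : ℕ → ℕ → ℝ) (N : ℕ) :
    ∑ m ∈ Finset.range N, ∑ p ∈ Finset.range m, f m p
      = ∑ p ∈ Finset.range N, ∑ m ∈ Finset.Ico (p + 1) N, f m p := by
  apply Finset.sum_comm'
  intro x y
  simp only [Finset.mem_range, Finset.mem_Ico]
  omega

lemma sum_inv_rev (M q : ℕ) (hq : q < M) :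
    ∑ p ∈ Finset.Ico (q + 1) M, ((M : ℝ) - p)⁻¹ = HH (M - (q + 1)) := by
  rw [Finset.sum_Ico_eq_sum_range, HH, ← Finset.sum_range_reflect]
  apply Finset.sum_congr rfl
  intro i hi
  rw [Finset.mem_range] at hi
  congr 1
  have : M = (q + 1 + (M - (q + 1) - 1 - i)) + (i + 1) := by omega
  have h2 := congrArg (Nat.cast (R := ℝ)) this
  push_cast at h2 ⊢
  linarith

lemma sum_inv_fwd (M q : ℕ) :
    ∑ p ∈ Finset.Ico (q + 1) M, ((p : ℝ) - q)⁻¹ = HH (M - (q + 1)) := by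
  rw [Finset.sum_Ico_eq_sum_range, HH]
  apply Finset.sum_congr rfl
  intro i hi
  congr 1
  push_cast
  ring

lemma sum_inv_H (M q : ℕ) (hq : q < M) :
    ∑ p ∈ Finset.Ico (q + 1) M, ((p + 1 : ℕ) : ℝ)⁻¹ = HH M - HH (q + 1) := by
  rw [Finset.sum_Ico_eq_sub _ (by omega)]; rfl

lemma conv_lem (l : List ℕ) (M : ℕ) :
    ∑ p ∈ Finset.range M, ZZ l p * ((M : ℝ) - p)⁻¹ = HH M * ZZ l M - DD l M := by
  cases l with
  | nil =>
    simp only [ZZ, DD, one_mul, mul_one, sub_zero]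
    rw [HH, ← Finset.sum_range_reflect]
    apply Finset.sum_congr rfl
    intro i hi
    rw [Finset.mem_range] at hi
    congr 1
    have : M = (M - 1 - i) + (i + 1) := by omega
    have h2 := congrArg (Nat.cast (R := ℝ)) this
    push_cast at h2 ⊢
    linarith
  | cons k l =>
    simp only [ZZ, DD, Finset.sum_mul, Finset.mul_sum]
    rw [sum_tri, ← Finset.sum_sub_distrib]
    apply Finset.sum_congr rfl
    intro q hq
    rw [Finset.mem_range] at hq
    rw [← Finset.mul_sum, sum_inv_rev M q hq]
    ring

lemma pf_lem (k : ℕ) (hk : 1 ≤ k) (x y : ℝ) (hx : x ≠ 0) (hy : y ≠ 0) (hxy : x ≠ y) :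
    ∑ j ∈ Finset.range (k - 1), (x ^ (k - j))⁻¹ * (y ^ (j + 1))⁻¹
      = (y ^ k)⁻¹ * ((x - y)⁻¹ - x⁻¹) - (x ^ k)⁻¹ * (x - y)⁻¹ := by
  have hs : x - y ≠ 0 := sub_ne_zero.mpr hxy
  obtain ⟨n, rfl⟩ : ∃ n, k = n + 1 := ⟨k - 1, by omega⟩
  rw [Nat.add_sub_cancel]
  clear hk
  induction n with
  | zero => simp; field_simp; ring
  | succ n ih =>
    have e : ∑ j ∈ Finset.range (n + 1), (x ^ (n + 1 + 1 - j))⁻¹ * (y ^ (j + 1))⁻¹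
        = x⁻¹ * (∑ j ∈ Finset.range n, (x ^ (n + 1 - j))⁻¹ * (y ^ (j + 1))⁻¹)
          + (x ^ 2)⁻¹ * (y ^ (n + 1))⁻¹ := by
      rw [Finset.sum_range_succ, Finset.mul_sum]
      congr 1
      · apply Finset.sum_congr rfl
        intro j hj
        rw [Finset.mem_range] at hj
        rw [show n + 1 + 1 - j = (n + 1 - j) + 1 by omega, pow_succ x (n + 1 - j), mul_inv]
        ring
      · rw [show n + 1 + 1 - n = 2 by omega]
    rw [e, ih]
    field_simp
    ring

lemma HH_succ (n : ℕ) : HH (n + 1) = HH n + ((n + 1 : ℕ) : ℝ)⁻¹ := by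
  simp [HH, Finset.sum_range_succ]

lemma split_lem (k : ℕ) (hk : 1 ≤ k) (l : List ℕ) (N : ℕ) :
    ∑ j ∈ Finset.range (k - 1), ZZ ((k - j) :: (j + 1) :: l) N
      = ∑ m ∈ Finset.range N, (((m + 1 : ℕ) : ℝ) ^ k)⁻¹ *
          ((HH (N - (m + 1)) - HH N + HH (m + 1)) * ZZ l m - (HH m * ZZ l m - DD l m)) := by
  simp only [ZZ]
  rw [Finset.sum_comm]
  have e : ∀ m ∈ Finset.range N, ∑ j ∈ Finset.range (k - 1), (((m + 1 : ℕ) : ℝ) ^ (k - j))⁻¹ *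
      ∑ p ∈ Finset.range m, (((p + 1 : ℕ) : ℝ) ^ (j + 1))⁻¹ * ZZ l p
      = (∑ p ∈ Finset.range m, (((p + 1 : ℕ) : ℝ) ^ k)⁻¹ * ZZ l p *
          (((m : ℝ) - p)⁻¹ - ((m + 1 : ℕ) : ℝ)⁻¹))
        - (((m + 1 : ℕ) : ℝ) ^ k)⁻¹ * ∑ p ∈ Finset.range m, ZZ l p * ((m : ℝ) - p)⁻¹ := by
    intro m hm
    simp only [Finset.mul_sum]
    rw [Finset.sum_comm, ← Finset.sum_sub_distrib]
    apply Finset.sum_congr rfl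
    intro p hp
    rw [Finset.mem_range] at hp
    have h := pf_lem k hk ((m + 1 : ℕ) : ℝ) ((p + 1 : ℕ) : ℝ) (by positivity) (by positivity)
      (by exact_mod_cast (by omega : m + 1 ≠ p + 1))
    have h3 : ((m + 1 : ℕ) : ℝ) - ((p + 1 : ℕ) : ℝ) = (m : ℝ) - p := by push_cast; ring
    rw [h3] at h
    simp only [← mul_assoc]
    rw [← Finset.sum_mul, h]
    ring
  rw [Finset.sum_congr rfl e, Finset.sum_sub_distrib, sum_tri, ← Finset.sum_sub_distrib]
  apply Finset.sum_congr rfl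
  intro q hq
  rw [Finset.mem_range] at hq
  rw [← Finset.mul_sum, Finset.sum_sub_distrib, sum_inv_fwd, sum_inv_H N q hq, conv_lem]
  ring

lemma fin_id (l : List ℕ) (hl : ∀ a ∈ l, 1 ≤ a) (N : ℕ) : AA l N = BB l N + DD l N := by
  induction l generalizing N with
  | nil => simp [AA, BB, DD]
  | cons k l ih =>
    have ih' := ih (fun a ha => hl a (List.mem_cons_of_mem _ ha))
    simp only [AA, BB, DD]
    rw [split_lem k (hl k (by simp))]
    simp only [ZZ, ih']
    rw [← Finset.sum_add_distrib, ← Finset.sum_add_distrib, ← Finset.sum_add_distrib]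
    apply Finset.sum_congr rfl
    intro m _
    rw [HH_succ, pow_succ, mul_inv]
    ring

lemma AA_eq (l : List ℕ) (N : ℕ) : ∑ i ∈ Finset.range l.length,
      ZZ (l.take i ++ [l.getD i 0 + 1] ++ l.drop (i + 1)) N = AA l N := by
  induction l generalizing N with
  | nil => simp [AA]
  | cons k l ih =>
    rw [List.length_cons, Finset.sum_range_succ']
    simp only [AA, ← ih, Finset.mul_sum]
    rw [Finset.sum_comm, add_comm]
    simp [ZZ]

lemma BB_eq (l : List ℕ) (N : ℕ) : (∑ i ∈ Finset.range l.length,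
      if 2 ≤ l.getD i 0 then
          ∑ j ∈ Finset.range (l.getD i 0 - 1),
            ZZ (l.take i ++ [l.getD i 0 - j, j + 1] ++ l.drop (i + 1)) N
        else 0) = BB l N := by
  have key : ∀ l : List ℕ, ∀ i N, (if 2 ≤ l.getD i 0 then
          ∑ j ∈ Finset.range (l.getD i 0 - 1),
            ZZ (l.take i ++ [l.getD i 0 - j, j + 1] ++ l.drop (i + 1)) N
        else 0) = ∑ j ∈ Finset.range (l.getD i 0 - 1),
            ZZ (l.take i ++ [l.getD i 0 - j, j + 1] ++ l.drop (i + 1)) N := by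
    intro l i N
    split_ifs with h
    · rfl
    · rw [show l.getD i 0 - 1 = 0 by omega]; simp
  simp only [key]
  induction l generalizing N with
  | nil => simp [BB]
  | cons k l ih =>
    rw [List.length_cons, Finset.sum_range_succ']
    simp only [BB, ← ih, Finset.mul_sum]
    rw [Finset.sum_comm, add_comm]
    simp only [List.getD_cons_succ, List.take_succ_cons, List.drop_succ_cons, List.cons_append]
    congr 1
    apply Finset.sum_congr rfl
    intro i _
    rw [Finset.sum_comm]
    simp [ZZ]

/-! Convergence. -/

lemma HH_nonneg (n : ℕ) : 0 ≤ HH n := Finset.sum_nonneg (fun _ _ => by positivity)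

lemma HH_mono : Monotone HH := monotone_nat_of_le_succ (fun n => by
  rw [HH_succ]; have : (0 : ℝ) ≤ ((n + 1 : ℕ) : ℝ)⁻¹ := by positivity
  linarith)

lemma ZZ_nonneg (l : List ℕ) (N : ℕ) : 0 ≤ ZZ l N := by
  induction l generalizing N with
  | nil => simp [ZZ]
  | cons k l ih => exact Finset.sum_nonneg (fun i _ => mul_nonneg (by positivity) (ih i))

lemma ZZ_le (l : List ℕ) (hl : ∀ a ∈ l, 1 ≤ a) (N : ℕ) : ZZ l N ≤ HH N ^ l.length := by
  induction l generalizing N with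
  | nil => simp [ZZ]
  | cons k l ih =>
    have ih' := ih (fun a ha => hl a (List.mem_cons_of_mem _ ha))
    have hk : 1 ≤ k := hl k (by simp)
    rw [List.length_cons, pow_succ', HH, Finset.sum_mul]
    apply Finset.sum_le_sum
    intro i hi
    rw [Finset.mem_range] at hi
    apply mul_le_mul _ _ (ZZ_nonneg _ _) (by positivity)
    · apply inv_anti₀ (by positivity)
      exact le_self_pow₀ (by exact_mod_cast Nat.succ_le_succ (Nat.zero_le i)) (by omega)
    · exact (ih' i).trans (pow_le_pow_left₀ (HH_nonneg i) (HH_mono hi.le) _)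

lemma HH_le_log (n : ℕ) : HH n ≤ 1 + Real.log n := by
  have := harmonic_le_one_add_log n
  have e : HH n = ((harmonic n : ℚ) : ℝ) := by simp [HH, harmonic]
  rw [e]; exact this

lemma summable_HH (n : ℕ) :
    Summable (fun i : ℕ => (((i + 1 : ℕ) : ℝ) ^ 2)⁻¹ * HH (i + 1) ^ n) := by
  apply (summable_nat_add_iff (f := fun i : ℕ => ((i : ℝ) ^ 2)⁻¹ * HH i ^ n) 1).2
  have h1 : (fun x : ℝ => (1 + Real.log x)) =o[Filter.atTop]
      (fun x : ℝ => x ^ (1 / (2 * (n + 1 : ℝ)))) := by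
    apply Asymptotics.IsLittleO.add
    · apply (Asymptotics.isLittleO_const_left).2
      right
      exact tendsto_norm_atTop_atTop.comp (tendsto_rpow_atTop (by positivity))
    · exact isLittleO_log_rpow_atTop (by positivity)
  have h2 := (h1.isBigO.comp_tendsto tendsto_natCast_atTop_atTop).pow n
  have h3 : (fun i : ℕ => HH i ^ n) =O[Filter.atTop] fun i : ℕ => (i : ℝ) ^ (1 / 2 : ℝ) := by
    refine Asymptotics.IsBigO.trans ?_ (h2.trans ?_)
    · apply Asymptotics.IsBigO.of_bound 1
      filter_upwards with i
      rw [one_mul, Real.norm_of_nonneg (pow_nonneg (HH_nonneg i) n)]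
      refine le_trans (pow_le_pow_left₀ (HH_nonneg i) (HH_le_log i) n) ?_
      exact le_abs_self _
    · apply Asymptotics.IsBigO.of_bound 1
      filter_upwards [Filter.eventually_ge_atTop 1] with i hi
      have hi' : (1 : ℝ) ≤ i := by exact_mod_cast hi
      simp only [Function.comp]
      rw [one_mul, Real.norm_of_nonneg (by positivity), Real.norm_of_nonneg (by positivity),
        ← Real.rpow_natCast, ← Real.rpow_mul (by positivity)]
      apply Real.rpow_le_rpow_of_exponent_le hi'
      rw [div_mul_eq_mul_div, one_mul, div_le_div_iff₀ (by positivity) (by positivity)]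
      linarith
  have hs : Summable (fun i : ℕ => (i : ℝ) ^ (-(3 / 2) : ℝ)) :=
    Real.summable_nat_rpow.2 (by norm_num)
  refine summable_of_isBigO_nat hs ?_
  have h4 := (Asymptotics.isBigO_refl (fun i : ℕ => ((i : ℝ) ^ 2)⁻¹) Filter.atTop).mul h3
  refine h4.trans (Asymptotics.IsBigO.of_bound 1 ?_)
  filter_upwards [Filter.eventually_ge_atTop 1] with i hi
  have hi' : (0 : ℝ) < i := by exact_mod_cast hi
  rw [one_mul]
  apply le_of_eq
  congr 1
  rw [← Real.rpow_natCast, ← Real.rpow_neg hi'.le, ← Real.rpow_add hi']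
  norm_num

lemma term_le (k : ℕ) (hk : 2 ≤ k) (l : List ℕ) (hl : ∀ a ∈ l, 1 ≤ a) (i : ℕ) :
    (((i + 1 : ℕ) : ℝ) ^ k)⁻¹ * ZZ l i ≤ (((i + 1 : ℕ) : ℝ) ^ 2)⁻¹ * HH (i + 1) ^ l.length := by
  apply mul_le_mul _ _ (ZZ_nonneg _ _) (by positivity)
  · apply inv_anti₀ (by positivity)
    exact pow_le_pow_right₀ (by exact_mod_cast Nat.succ_le_succ (Nat.zero_le i)) hk
  · exact (ZZ_le l hl i).trans (pow_le_pow_left₀ (HH_nonneg i) (HH_mono (Nat.le_succ i)) _)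

lemma HH_sub_le (N m : ℕ) (h : m ≤ N) : HH N - HH (N - m) ≤ HH m := by
  obtain ⟨d, rfl⟩ := Nat.exists_eq_add_of_le h
  rw [Nat.add_sub_cancel_left]
  clear h
  induction m with
  | zero => simp [HH]
  | succ m ih =>
    rw [show m + 1 + d = (m + d) + 1 by ring, HH_succ, HH_succ]
    have : ((m + d + 1 : ℕ) : ℝ)⁻¹ ≤ ((m + 1 : ℕ) : ℝ)⁻¹ := by
      apply inv_anti₀ (by positivity)
      exact_mod_cast (by omega)
    linarith

lemma HH_sub_tendsto (m : ℕ) :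
    Filter.Tendsto (fun N => HH N - HH (N - m)) Filter.atTop (nhds 0) := by
  rw [← Filter.tendsto_add_atTop_iff_nat m]
  simp only [Nat.add_sub_cancel]
  induction m with
  | zero => simp
  | succ m ih =>
    have h : Filter.Tendsto (fun N : ℕ => ((N + m + 1 : ℕ) : ℝ)⁻¹) Filter.atTop (nhds 0) := by
      have := tendsto_inv_atTop_nhds_zero_nat (𝕜 := ℝ)
      exact (Filter.tendsto_add_atTop_iff_nat (m + 1)).2 this
    have h2 := ih.add h
    rw [add_zero] at h2
    refine h2.congr (fun N => ?_)
    rw [← add_assoc, HH_succ]; ring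

lemma DD_tendsto (k : ℕ) (hk : 2 ≤ k) (l : List ℕ) (hl : ∀ a ∈ l, 1 ≤ a) :
    Filter.Tendsto (DD (k :: l)) Filter.atTop (nhds 0) := by
  have key := tendsto_tsum_of_dominated_convergence (𝓕 := Filter.atTop)
    (f := fun (N i : ℕ) => if i < N then
      (((i + 1 : ℕ) : ℝ) ^ k)⁻¹ * ZZ l i * (HH N - HH (N - (i + 1))) else 0)
    (g := fun _ => (0 : ℝ)) (summable_HH (l.length + 1)) ?_ ?_
  · rw [tsum_zero] at key
    refine key.congr (fun N => ?_)
    rw [tsum_eq_sum (s := Finset.range N)]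
    · rw [DD]
      apply Finset.sum_congr rfl
      intro i hi
      rw [if_pos (Finset.mem_range.1 hi)]
    · intro i hi
      rw [if_neg (by simpa using hi)]
  · intro i
    have h := (HH_sub_tendsto (i + 1)).const_mul ((((i + 1 : ℕ) : ℝ) ^ k)⁻¹ * ZZ l i)
    rw [mul_zero] at h
    refine h.congr' ?_
    filter_upwards [Filter.eventually_gt_atTop i] with N hN
    rw [if_pos hN]
  · filter_upwards with N i
    split_ifs with h
    · have h0 : 0 ≤ HH N - HH (N - (i + 1)) := sub_nonneg.2 (HH_mono (Nat.sub_le _ _))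
      have h1 : 0 ≤ (((i + 1 : ℕ) : ℝ) ^ k)⁻¹ * ZZ l i := mul_nonneg (by positivity) (ZZ_nonneg _ _)
      rw [Real.norm_of_nonneg (mul_nonneg h1 h0), pow_succ (HH (i + 1)), ← mul_assoc]
      exact mul_le_mul (term_le k hk l hl i) (HH_sub_le N (i + 1) h) h0
        (mul_nonneg (by positivity) (pow_nonneg (HH_nonneg _) _))
    · rw [norm_zero]
      exact mul_nonneg (by positivity) (pow_nonneg (HH_nonneg _) _)

/-! Link with the series. -/

def FF : (n : ℕ) → ℕ → Finset (Fin n → ℕ)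
  | 0, _ => Finset.univ
  | n + 1, N => (Finset.range N).biUnion (fun i => (FF n i).image
      (fun f => (Fin.cons (i + 1) f : Fin (n + 1) → ℕ)))

lemma mem_FF (n N : ℕ) (f : Fin n → ℕ) : f ∈ FF n N ↔
    (∀ i, f i ≤ N) ∧ (∀ i, 0 < f i) ∧ ∀ i j : Fin n, i < j → f j < f i := by
  induction n generalizing N with
  | zero => simp [FF, eq_iff_true_of_subsingleton]
  | succ n ih =>
    simp only [FF, Finset.mem_biUnion, Finset.mem_range, Finset.mem_image]
    constructor
    · rintro ⟨i, hi, g, hg, rfl⟩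
      obtain ⟨h1, h2, h3⟩ := (ih i g).1 hg
      refine ⟨?_, ?_, ?_⟩
      · intro j
        refine Fin.cases ?_ (fun j => ?_) j
        · simpa using hi
        · simpa using (h1 j).trans hi.le
      · intro j
        refine Fin.cases ?_ (fun j => ?_) j
        · simp
        · simpa using h2 j
      · intro a b
        refine Fin.cases ?_ (fun b => ?_) b
        · intro h; exact absurd h (Fin.not_lt_zero a)
        · refine Fin.cases ?_ (fun a => ?_) a
          · intro _; simpa using Nat.lt_succ_of_le (h1 b)
          · intro h; simpa using h3 a b (by simpa using h)
    · rintro ⟨h1, h2, h3⟩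
      have p0 := h2 0
      have q0 := h1 0
      refine ⟨f 0 - 1, by omega, Fin.tail f, ?_, ?_⟩
      · rw [ih]
        refine ⟨fun i => ?_, fun i => h2 _, fun i j hij => h3 _ _ (by simpa using hij)⟩
        have := h3 0 i.succ (Fin.succ_pos i)
        simp only [Fin.tail]
        omega
      · rw [Nat.sub_add_cancel p0, Fin.cons_self_tail]

lemma sum_FF (l : List ℕ) (N : ℕ) :
    ∑ f ∈ FF l.length N, ∏ i : Fin l.length, ((f i : ℝ) ^ l.get i)⁻¹ = ZZ l N := by
  induction l generalizing N with
  | nil => simp [FF, ZZ]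
  | cons k l ih =>
    simp only [ZZ, ← ih]
    change ∑ f ∈ FF (l.length + 1) N, ∏ i : Fin (l.length + 1), ((f i : ℝ) ^ (k :: l).get i)⁻¹ = _
    rw [FF, Finset.sum_biUnion]
    · apply Finset.sum_congr rfl
      intro i _
      rw [Finset.sum_image, Finset.mul_sum]
      · apply Finset.sum_congr rfl
        intro f _
        rw [Fin.prod_univ_succ]
        simp
      · intro a _ b _ hab
        exact (Fin.cons_injective2 hab).2
    · intro a _ b _ hab
      simp only [Function.onFun]
      rw [Finset.disjoint_left]
      intro f hf hg
      simp only [Finset.mem_image] at hf hg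
      obtain ⟨g, _, rfl⟩ := hf
      obtain ⟨g', _, h⟩ := hg
      have := (Fin.cons_injective2 h).1
      omega

lemma ZZ_tendsto (l : List ℕ) (hl : ∀ a ∈ l, 1 ≤ a) (h2 : 2 ≤ l.headI) :
    Filter.Tendsto (ZZ l) Filter.atTop (nhds (mzeta l)) := by
  classical
  obtain ⟨C, hC⟩ : ∃ C, ∀ N, ZZ l N ≤ C := by
    cases l with
    | nil => exact ⟨1, fun N => by simp [ZZ]⟩
    | cons k l =>
      refine ⟨∑' i : ℕ, (((i + 1 : ℕ) : ℝ) ^ 2)⁻¹ * HH (i + 1) ^ l.length, fun N => ?_⟩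
      rw [ZZ]
      refine (Finset.sum_le_sum (fun i _ => term_le k h2 l
        (fun a ha => hl a (List.mem_cons_of_mem _ ha)) i)).trans ?_
      exact (summable_HH l.length).sum_le_tsum _
        (fun i _ => mul_nonneg (by positivity) (pow_nonneg (HH_nonneg _) _))
  let P : (Fin l.length → ℕ) → Prop := fun f => (∀ i, 0 < f i) ∧
      ∀ i j : Fin l.length, i < j → f j < f i
  let g : {f // P f} → ℝ := fun m => ∏ i : Fin l.length, ((m.1 i : ℝ) ^ l.get i)⁻¹
  let G : ℕ → Finset {f // P f} := fun N => (FF l.length N).subtype P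
  have hG : ∀ N, ∑ m ∈ G N, g m = ZZ l N := by
    intro N
    rw [← sum_FF]
    exact Finset.sum_subtype_of_mem
      (fun f : Fin l.length → ℕ => ∏ i : Fin l.length, ((f i : ℝ) ^ l.get i)⁻¹)
      (fun f hf => ((mem_FF _ _ _).1 hf).2)
  have hmono : Monotone G := by
    intro a b hab m hm
    simp only [G, Finset.mem_subtype, mem_FF] at hm ⊢
    exact ⟨fun i => (hm.1 i).trans hab, hm.2⟩
  have hex : ∀ m : {f // P f}, ∃ N, m ∈ G N := by
    intro m
    refine ⟨∑ i, m.1 i, ?_⟩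
    simp only [G, Finset.mem_subtype, mem_FF]
    exact ⟨fun i => Finset.single_le_sum (f := m.1) (fun _ _ => Nat.zero_le _) (Finset.mem_univ i),
      m.2⟩
  have htop : Filter.Tendsto G Filter.atTop Filter.atTop :=
    Filter.tendsto_atTop_finset_of_monotone hmono hex
  have g0 : ∀ m, 0 ≤ g m := fun m => Finset.prod_nonneg (fun i _ => by positivity)
  have hs : Summable g := by
    refine summable_of_sum_le g0 (c := C) (fun u => ?_)
    obtain ⟨N, hN⟩ := (htop.eventually (Filter.eventually_ge_atTop u)).exists
    exact (Finset.sum_le_sum_of_subset_of_nonneg hN (fun m _ _ => g0 m)).trans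
      ((hG N).le.trans (hC N))
  have := hs.hasSum.comp htop
  exact this.congr hG

/-- Hoffman's relations: for positive integers k₁,…,kₙ with k₁ ≥ 2,
Σᵢ ζ(k₁,…,kᵢ+1,…,kₙ)
  = Σ_{i, kᵢ ≥ 2} Σ_{j=0}^{kᵢ−2} ζ(k₁,…,k_{i−1}, kᵢ−j, j+1, k_{i+1},…,kₙ). -/
theorem hoffman_relations (k : List ℕ) (hne : k ≠ [])
    (hpos : ∀ a ∈ k, 1 ≤ a) (h2 : 2 ≤ k.headI) :
    ∑ i ∈ Finset.range k.length,
      mzeta (k.take i ++ [k.getD i 0 + 1] ++ k.drop (i + 1))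
    = ∑ i ∈ Finset.range k.length,
        if 2 ≤ k.getD i 0 then
          ∑ j ∈ Finset.range (k.getD i 0 - 1),
            mzeta (k.take i ++ [k.getD i 0 - j, j + 1] ++ k.drop (i + 1))
        else 0 := by
  have hA : Filter.Tendsto (AA k) Filter.atTop (nhds (∑ i ∈ Finset.range k.length,
      mzeta (k.take i ++ [k.getD i 0 + 1] ++ k.drop (i + 1)))) := by
    refine Filter.Tendsto.congr (AA_eq k) ?_
    refine tendsto_finsetSum _ (fun i hi => ZZ_tendsto _ ?_ ?_)
    · intro a ha
      simp only [List.mem_append, List.mem_singleton] at ha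
      rcases ha with (ha | ha) | ha
      · exact hpos a (List.mem_of_mem_take ha)
      · omega
      · exact hpos a (List.mem_of_mem_drop ha)
    · cases k with
      | nil => exact absurd rfl hne
      | cons b t =>
        simp only [List.headI] at h2
        cases i with
        | zero => simp; omega
        | succ i => simpa using h2
  have hB : Filter.Tendsto (BB k) Filter.atTop (nhds (∑ i ∈ Finset.range k.length,
        if 2 ≤ k.getD i 0 then
          ∑ j ∈ Finset.range (k.getD i 0 - 1),
            mzeta (k.take i ++ [k.getD i 0 - j, j + 1] ++ k.drop (i + 1))
        else 0)) := by
    refine Filter.Tendsto.congr (BB_eq k) ?_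
    refine tendsto_finsetSum _ (fun i hi => ?_)
    split_ifs with hc
    swap
    · exact tendsto_const_nhds
    refine tendsto_finsetSum _ (fun j hj => ZZ_tendsto _ ?_ ?_)
    · intro a ha
      rw [Finset.mem_range] at hj
      simp only [List.mem_append, List.mem_cons, List.not_mem_nil, or_false] at ha
      rcases ha with (ha | ha | ha) | ha
      · exact hpos a (List.mem_of_mem_take ha)
      · omega
      · omega
      · exact hpos a (List.mem_of_mem_drop ha)
    · rw [Finset.mem_range] at hj
      cases k with
      | nil => exact absurd rfl hne
      | cons b t =>
        simp only [List.headI] at h2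
        cases i with
        | zero => simp at hj ⊢; omega
        | succ i => simpa using h2
  have hD : Filter.Tendsto (DD k) Filter.atTop (nhds 0) := by
    cases k with
    | nil => exact absurd rfl hne
    | cons b t => exact DD_tendsto b h2 t (fun a ha => hpos a (List.mem_cons_of_mem _ ha))
  have hBD := hB.add hD
  rw [add_zero] at hBD
  exact tendsto_nhds_unique hA (hBD.congr (fun N => (fin_id k hpos N).symm))
end

section
/- For all positive integers k1, …, kn with k1 ≥ 2, the non-strict multiple zeta value expands as a sum of multiple zeta values over all ways of merging consecutive blocks of the index string: ζ̄(k1, …, kn) = Σ ζ(k_{i_0+1} + ⋯ + k_{i_1}, k_{i_1+1} + ⋯ + k_{i_2}, …, k_{i_{r−1}+1} + ⋯ + k_{i_r}), where the sum is over all 1 ≤ r ≤ n and all sequences 0 = i_0 < i_1 < ⋯ < i_r = n. -/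
open scoped BigOperators

/-- Given the index list `k = [k₁,…,kₙ]` and an increasing list
`c = [i₁,…,i_{r-1}]` of interior cut points (with `0 = i₀ < i₁ < ⋯ < i_r = n`),
returns the list of block sums
`[k₁+⋯+k_{i₁}, k_{i₁+1}+⋯+k_{i₂}, …, k_{i_{r-1}+1}+⋯+kₙ]`. -/
def blocks : List ℕ → List ℕ → List ℕ
  | k, [] => [k.sum]
  | k, i :: rest => (k.take i).sum :: blocks (k.drop i) (rest.map (· - i))
termination_by _ c => c.length
decreasing_by simp

noncomputable def zzT : List ℕ → ℕ∞ → ENNReal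
  | [], _ => 1
  | k :: ks, N => ∑' m : ℕ, if 0 < m ∧ (m : ℕ∞) < N then ((m : ENNReal) ^ k)⁻¹ * zzT ks (m + 1 : ℕ) else 0

noncomputable def zzZ : List ℕ → ℕ∞ → ENNReal
  | [], _ => 1
  | k :: ks, N => ∑' m : ℕ, if 0 < m ∧ (m : ℕ∞) < N then ((m : ENNReal) ^ k)⁻¹ * zzZ ks m else 0

open Classical in
theorem zzZ_eq (ks : List ℕ) : ∀ N : ℕ∞, zzZ ks N =
    ∑' f : Fin ks.length → ℕ, if ((∀ i, 0 < f i) ∧ ∀ i j : Fin ks.length, i < j → f j < f i) ∧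
      (∀ i, (f i : ℕ∞) < N) then ∏ i : Fin ks.length, ((f i : ENNReal) ^ ks.get i)⁻¹ else 0 := by
  induction ks with
  | nil =>
    intro N
    simp [zzZ]
  | cons k ks ih =>
    intro N
    rw [zzZ]
    simp only [List.length_cons]
    rw [← (Fin.consEquiv (fun _ : Fin (ks.length + 1) => ℕ)).tsum_eq, ENNReal.tsum_prod']
    refine tsum_congr fun m => ?_
    rw [ih]
    by_cases hm : 0 < m ∧ (m : ℕ∞) < N
    · rw [if_pos hm, ← ENNReal.tsum_mul_left]
      refine tsum_congr fun g => ?_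
      simp only [Fin.consEquiv, Equiv.coe_fn_mk, Fin.prod_univ_succ, mul_ite, mul_zero]
      refine if_congr ?_ (by simp) rfl
      simp only [Fin.forall_fin_succ, Fin.cons_zero, Fin.cons_succ, Nat.cast_lt,
        Fin.succ_lt_succ_iff, Fin.succ_pos, lt_irrefl, Fin.not_lt_zero, false_imp_iff, true_imp_iff,
        true_and]
      constructor
      · rintro ⟨⟨h1, h2⟩, h3⟩
        exact ⟨⟨⟨hm.1, h1⟩, h3, h2⟩, hm.2, fun i => lt_trans (by exact_mod_cast h3 i) hm.2⟩
      · rintro ⟨⟨⟨_, h1⟩, h3, h2⟩, _⟩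
        exact ⟨⟨h1, h2⟩, h3⟩
    · rw [if_neg hm]
      symm
      refine ENNReal.tsum_eq_zero.2 fun g => if_neg ?_
      rintro ⟨⟨h1, _⟩, h2⟩
      exact hm ⟨by simpa [Fin.consEquiv] using h1 0, by simpa [Fin.consEquiv] using h2 0⟩

open Classical in
theorem zzT_eq (ks : List ℕ) : ∀ N : ℕ∞, zzT ks N =
    ∑' f : Fin ks.length → ℕ, if ((∀ i, 0 < f i) ∧ ∀ i j : Fin ks.length, i ≤ j → f j ≤ f i) ∧
      (∀ i, (f i : ℕ∞) < N) then ∏ i : Fin ks.length, ((f i : ENNReal) ^ ks.get i)⁻¹ else 0 := by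
  induction ks with
  | nil =>
    intro N
    simp [zzT]
  | cons k ks ih =>
    intro N
    rw [zzT]
    simp only [List.length_cons]
    rw [← (Fin.consEquiv (fun _ : Fin (ks.length + 1) => ℕ)).tsum_eq, ENNReal.tsum_prod']
    refine tsum_congr fun m => ?_
    rw [ih]
    by_cases hm : 0 < m ∧ (m : ℕ∞) < N
    · rw [if_pos hm, ← ENNReal.tsum_mul_left]
      refine tsum_congr fun g => ?_
      simp only [Fin.consEquiv, Equiv.coe_fn_mk, Fin.prod_univ_succ, mul_ite, mul_zero]
      refine if_congr ?_ (by simp) rfl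
      simp only [Fin.forall_fin_succ, Fin.cons_zero, Fin.cons_succ, Nat.cast_lt,
        Fin.succ_le_succ_iff, Fin.zero_le, le_refl, true_imp_iff, Nat.lt_succ_iff,
        true_and]
      constructor
      · rintro ⟨⟨h1, h2⟩, h3⟩
        exact ⟨⟨⟨hm.1, h1⟩, h3, fun i => ⟨fun h => absurd h (by simp [Fin.le_def]), h2 i⟩⟩, hm.2,
          fun i => lt_of_le_of_lt (by exact_mod_cast h3 i) hm.2⟩
      · rintro ⟨⟨⟨_, h1⟩, h3, h2⟩, _⟩
        exact ⟨⟨h1, fun i => (h2 i).2⟩, h3⟩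
    · rw [if_neg hm]
      symm
      refine ENNReal.tsum_eq_zero.2 fun g => if_neg ?_
      rintro ⟨⟨h1, _⟩, h2⟩
      exact hm ⟨by simpa [Fin.consEquiv] using h1 0, by simpa [Fin.consEquiv] using h2 0⟩

theorem zz_toReal {n : ℕ} (P : (Fin n → ℕ) → Prop) [DecidablePred P] (hP : ∀ f, P f → ∀ i, 0 < f i) (e : Fin n → ℕ) :
    ∑' m : {f : Fin n → ℕ // P f}, ∏ i : Fin n, ((m.1 i : ℝ) ^ e i)⁻¹ =
    (∑' f : Fin n → ℕ, if P f then ∏ i : Fin n, ((f i : ENNReal) ^ e i)⁻¹ else 0).toReal := by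
  have h : (∑' f : Fin n → ℕ, if P f then ∏ i : Fin n, ((f i : ENNReal) ^ e i)⁻¹ else 0)
      = ∑' m : {f : Fin n → ℕ // P f}, ∏ i : Fin n, ((m.1 i : ENNReal) ^ e i)⁻¹ := by
    have := tsum_subtype {f | P f} (fun f : Fin n → ℕ => ∏ i : Fin n, ((f i : ENNReal) ^ e i)⁻¹)
    refine Eq.trans ?_ this.symm
    refine tsum_congr fun f => ?_
    simp [Set.indicator_apply]
  rw [h, ENNReal.tsum_toReal_eq]
  · refine tsum_congr fun m => ?_
    simp [ENNReal.toReal_prod]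
  · intro m
    refine ENNReal.prod_ne_top fun i _ => ?_
    have := hP _ m.2 i
    simp [ENNReal.inv_eq_top]
    omega

theorem mzeta_eq (ks : List ℕ) : mzeta ks = (zzZ ks ⊤).toReal := by
  classical
  rw [mzeta, zzZ_eq, zz_toReal _ (fun f h => h.1)]
  simp

theorem nmzeta_eq (ks : List ℕ) : nmzeta ks = (zzT ks ⊤).toReal := by
  classical
  rw [nmzeta, zzT_eq, zz_toReal _ (fun f h => h.1)]
  simp

noncomputable def zzM (F : List ℕ → ENNReal) (k : List ℕ) : ENNReal :=
  ∑ S ∈ (Finset.Icc 1 (k.length - 1)).powerset, F (blocks k (S.sort (· ≤ ·)))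

theorem blocks_one (a b : ℕ) (r c : List ℕ) :
    blocks (a :: b :: r) (1 :: c.map (· + 1)) = a :: blocks (b :: r) c := by
  rw [blocks]
  simp [Function.comp_def]

theorem blocks_succ (a b : ℕ) (r c : List ℕ) (hc : ∀ x ∈ c, 1 ≤ x) :
    blocks (a :: b :: r) (c.map (· + 1)) = blocks ((a + b) :: r) c := by
  cases c with
  | nil => simp [blocks, add_assoc]
  | cons i c =>
    obtain ⟨i, rfl⟩ : ∃ j, i = j + 1 := ⟨i - 1, by have := hc i (by simp); omega⟩
    rw [List.map_cons, blocks, blocks]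
    simp [Function.comp_def, add_assoc]

theorem zz_sort (S : Finset ℕ) : (S.image (· + 1)).sort (· ≤ ·) = (S.sort (· ≤ ·)).map (· + 1) := by
  have hp : ((S.image (· + 1)).sort (· ≤ ·)).Perm ((S.sort (· ≤ ·)).map (· + 1)) := by
    refine (List.perm_ext_iff_of_nodup (Finset.sort_nodup _ _) ?_).2 ?_
    · exact (Finset.sort_nodup _ _).map (fun a b h => by simpa using h)
    · intro a; simp
  refine hp.eq_of_pairwise (le := (· ≤ ·)) (fun a b _ _ h1 h2 => le_antisymm h1 h2) (Finset.pairwise_sort _ _) ?_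
  rw [List.pairwise_map]
  exact (Finset.pairwise_sort S (· ≤ ·)).imp (fun h => by omega)

theorem zzM_rec (F : List ℕ → ENNReal) (a b : ℕ) (r : List ℕ) :
    zzM F (a :: b :: r) = zzM (fun l => F (a :: l)) (b :: r) + zzM F ((a + b) :: r) := by
  have h : Finset.Icc 1 ((a :: b :: r).length - 1) =
      insert 1 ((Finset.Icc 1 r.length).image (· + 1)) := by
    ext x
    simp only [Finset.mem_Icc, List.length_cons, Finset.mem_insert, Finset.mem_image]
    constructor
    · intro h
      by_cases hx : x = 1
      · exact Or.inl hx
      · exact Or.inr ⟨x - 1, by omega, by omega⟩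
    · rintro (h | ⟨y, h, rfl⟩) <;> omega
  have hinj : Function.Injective (fun x : ℕ => x + 1) := fun a b h => by simpa using h
  unfold zzM
  rw [h, Finset.sum_powerset_insert (by simp), Finset.powerset_image,
    Finset.sum_image (fun _ _ _ _ h => Finset.image_injective hinj h),
    Finset.sum_image (fun _ _ _ _ h => Finset.image_injective hinj h), add_comm]
  simp only [List.length_cons, Nat.add_sub_cancel]
  congr 1
  · refine Finset.sum_congr rfl fun S hS => ?_
    rw [Finset.mem_powerset] at hS
    have hS' : ∀ x ∈ S, 1 ≤ x := fun x hx => (Finset.mem_Icc.1 (hS hx)).1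
    rw [Finset.sort_insert (r := (· ≤ ·)), zz_sort, blocks_one]
    · simp
    · intro h
      simp only [Finset.mem_image] at h
      obtain ⟨x, hx, h⟩ := h
      have := hS' x hx
      omega
  · refine Finset.sum_congr rfl fun S hS => ?_
    rw [Finset.mem_powerset] at hS
    have hS' : ∀ x ∈ S, 1 ≤ x := fun x hx => (Finset.mem_Icc.1 (hS hx)).1
    rw [zz_sort, blocks_succ _ _ _ _ (by simpa using hS')]

theorem zzT_succ (b : ℕ) (r : List ℕ) (m : ℕ) (hm : 0 < m) :
    zzT (b :: r) (m + 1 : ℕ) = zzT (b :: r) m + ((m : ENNReal) ^ b)⁻¹ * zzT r (m + 1 : ℕ) := by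
  rw [zzT, zzT, ← tsum_ite_eq m (fun m : ℕ => ((m : ENNReal) ^ b)⁻¹ * zzT r (m + 1 : ℕ)), ← ENNReal.tsum_add]
  refine tsum_congr fun j => ?_
  simp only [Nat.cast_lt]
  by_cases hj : j = m
  · subst hj
    simp [hm]
  · have : j < m + 1 ↔ j < m := by omega
    simp [this, hj]

theorem zzT_rec (a b : ℕ) (r : List ℕ) (N : ℕ∞) : zzT (a :: b :: r) N =
    (∑' m : ℕ, if 0 < m ∧ (m : ℕ∞) < N then ((m : ENNReal) ^ a)⁻¹ * zzT (b :: r) m else 0)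
      + zzT ((a + b) :: r) N := by
  rw [zzT]
  conv_rhs => rw [zzT]
  rw [← ENNReal.tsum_add]
  refine tsum_congr fun m => ?_
  split_ifs with h
  · rw [zzT_succ _ _ _ h.1, mul_add, ← mul_assoc, pow_add, ENNReal.mul_inv (by simp) (by simp)]
  · simp

theorem zz_main : ∀ (n : ℕ) (k : List ℕ), k.length = n + 1 → ∀ N, zzT k N = zzM (fun l => zzZ l N) k := by
  intro n
  induction n with
  | zero =>
    intro k hk N
    obtain ⟨a, rfl⟩ := List.length_eq_one_iff.1 hk
    simp [zzM, blocks, zzT, zzZ]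
  | succ n ih =>
    intro k hk N
    match k, hk with
    | a :: b :: r, hk =>
      rw [zzT_rec, zzM_rec, ih ((a + b) :: r) (by simpa using hk)]
      congr 1
      simp only [zzM, zzZ]
      rw [← Summable.tsum_finsetSum (fun _ _ => ENNReal.summable)]
      refine tsum_congr fun m => ?_
      rw [ih (b :: r) (by simpa using hk)]
      split_ifs with h
      · rw [zzM, Finset.mul_sum]
      · simp

theorem zz_sqrt (m : ℕ) : ∑ j ∈ Finset.Icc 1 m, (j : ℝ)⁻¹ * √(j : ℝ) ≤ 2 * √(m : ℝ) := by
  induction m with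
  | zero => simp
  | succ m ih =>
    rw [Finset.sum_Icc_succ_top (by omega)]
    have h0 : (0 : ℝ) ≤ m := by positivity
    have h1 : √((m + 1 : ℕ) : ℝ) ^ 2 = m + 1 := by rw [Real.sq_sqrt (by positivity)]; push_cast; ring
    have h2 : √(m : ℝ) ^ 2 = m := Real.sq_sqrt h0
    have h3 : 0 < √((m + 1 : ℕ) : ℝ) := by positivity
    have h4 : ((m + 1 : ℕ) : ℝ)⁻¹ * √((m + 1 : ℕ) : ℝ) = (√((m + 1 : ℕ) : ℝ))⁻¹ := by
      have : ((m + 1 : ℕ) : ℝ) = √((m + 1 : ℕ) : ℝ) ^ 2 := by rw [h1]; push_cast; ring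
      field_simp
      linarith
    rw [h4]
    set s := √((m + 1 : ℕ) : ℝ)
    set t := √(m : ℝ)
    have : s⁻¹ ≤ 2 * s - 2 * t := by
      rw [inv_le_iff_one_le_mul₀ h3]
      nlinarith [sq_nonneg (s - t)]
    linarith

theorem zz_inv_le (j a c : ℕ) (hj : 0 < j) (h : c ≤ a) :
    ((j : ENNReal) ^ a)⁻¹ ≤ ENNReal.ofReal (((j : ℝ) ^ c)⁻¹) := by
  rw [ENNReal.ofReal_inv_of_pos (by positivity), ENNReal.ofReal_pow (by positivity), ENNReal.ofReal_natCast]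
  refine ENNReal.inv_le_inv.2 (pow_le_pow_right₀ ?_ h)
  exact_mod_cast hj

theorem zzT_bound (ks : List ℕ) (h : ∀ a ∈ ks, 1 ≤ a) : ∀ m : ℕ, 0 < m →
    zzT ks (m + 1 : ℕ) ≤ ENNReal.ofReal (2 ^ ks.length * √(m : ℝ)) := by
  induction ks with
  | nil =>
    intro m hm
    simp only [zzT, List.length_nil, pow_zero, one_mul]
    rw [ENNReal.one_le_ofReal, Real.one_le_sqrt]
    exact_mod_cast hm
  | cons k ks ih =>
    intro m hm
    rw [zzT]
    have hz : ∀ j ∉ Finset.Icc 1 m, (if 0 < j ∧ (j : ℕ∞) < (m + 1 : ℕ) then ((j : ENNReal) ^ k)⁻¹ * zzT ks (j + 1 : ℕ) else 0) = 0 := by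
      intro j hj
      refine if_neg ?_
      rw [Nat.cast_lt]
      simp only [Finset.mem_Icc] at hj
      omega
    rw [tsum_eq_sum hz]
    calc _ ≤ ∑ j ∈ Finset.Icc 1 m, ENNReal.ofReal (2 ^ ks.length * ((j : ℝ)⁻¹ * √(j : ℝ))) := by
          refine Finset.sum_le_sum fun j hj => ?_
          have hj0 : 0 < j := (Finset.mem_Icc.1 hj).1
          split_ifs
          · have h1 := zz_inv_le j k 1 hj0 (h k (by simp))
            have h2 := ih (fun a ha => h a (by simp [ha])) j hj0
            refine (mul_le_mul' h1 h2).trans ?_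
            rw [← ENNReal.ofReal_mul (by positivity)]
            refine ENNReal.ofReal_le_ofReal (le_of_eq ?_)
            ring
          · simp
      _ = ENNReal.ofReal (2 ^ ks.length * ∑ j ∈ Finset.Icc 1 m, ((j : ℝ)⁻¹ * √(j : ℝ))) := by
          rw [Finset.mul_sum, ENNReal.ofReal_sum_of_nonneg]
          intro j _
          positivity
      _ ≤ _ := by
          refine ENNReal.ofReal_le_ofReal ?_
          have := zz_sqrt m
          rw [List.length_cons, pow_succ, mul_assoc]
          gcongr

theorem zzT_ne_top (k : ℕ) (ks : List ℕ) (hk : 2 ≤ k) (h : ∀ a ∈ ks, 1 ≤ a) : zzT (k :: ks) ⊤ ≠ ⊤ := by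
  rw [zzT]
  have hs : Summable (fun j : ℕ => (2 : ℝ) ^ ks.length * (1 / (j : ℝ) ^ (3 / 2 : ℝ))) :=
    (Real.summable_one_div_nat_rpow.2 (by norm_num)).mul_left _
  refine ne_top_of_le_ne_top hs.tsum_ofReal_ne_top (ENNReal.tsum_le_tsum fun j => ?_)
  split_ifs with hj
  · have hj0 := hj.1
    have h1 := zz_inv_le j k 2 hj0 hk
    have h2 := zzT_bound ks h j hj0
    refine (mul_le_mul' h1 h2).trans ?_
    rw [← ENNReal.ofReal_mul (by positivity)]
    refine ENNReal.ofReal_le_ofReal (le_of_eq ?_)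
    have hj' : (0 : ℝ) < j := by exact_mod_cast hj0
    have h3 : (j : ℝ) ^ (3 / 2 : ℝ) * √(j : ℝ) = (j : ℝ) ^ 2 := by
      rw [Real.sqrt_eq_rpow, ← Real.rpow_add hj', ← Real.rpow_natCast]
      norm_num
    rw [← h3]
    have : 0 < √(j : ℝ) := by positivity
    field_simp
  · simp

/-- For positive integers k₁,…,kₙ with k₁ ≥ 2, the non-strict MZV expands as a
sum of MZVs over all ways of merging consecutive blocks:
ζ̄(k₁,…,kₙ) = Σ ζ(k_{i₀+1}+⋯+k_{i₁}, …, k_{i_{r-1}+1}+⋯+k_{i_r}),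
summed over all 1 ≤ r ≤ n and all 0 = i₀ < i₁ < ⋯ < i_r = n; the interior cut
points {i₁,…,i_{r-1}} range over all subsets of {1,…,n−1}. -/
theorem nmzv_eq_sum_mzv (k : List ℕ) (hne : k ≠ [])
    (hpos : ∀ a ∈ k, 1 ≤ a) (h2 : 2 ≤ k.headI) :
    nmzeta k =
      ∑ S ∈ (Finset.Icc 1 (k.length - 1)).powerset,
        mzeta (blocks k (S.sort (· ≤ ·))) := by
  cases k with
  | nil => exact absurd rfl hne
  | cons a ks =>
    have hfin := zzT_ne_top a ks h2 (fun x hx => hpos x (by simp [hx]))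
    have hm := zz_main ks.length (a :: ks) rfl ⊤
    simp only [mzeta_eq, nmzeta_eq]
    rw [hm, zzM] at hfin
    rw [hm, zzM, ENNReal.toReal_sum]
    exact fun S hS => ne_top_of_le_ne_top hfin
      (Finset.single_le_sum (f := fun S : Finset ℕ => zzZ (blocks (a :: ks) (S.sort (· ≤ ·))) ⊤) (fun _ _ => zero_le) hS)
end
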